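/- arXiv:2508.16103 — 3 statements merged into one kernel-verified Lean document; each statement's English description precedes it below -/
import Mathlib

section
/- Enlarged class of test functions (Proposition 2.2): Let n ≥ 1, s ∈ (0,1), Λ ≥ 1, let k be an (s,Λ)-admissible kernel, and let Ω ⊂ ℝ^n be open. A function u ∈ W^{s,2}_loc(Ω) ∩ L^1_{2s}(ℝ^n) is a weak supersolution (resp. weak subsolution) of Lu = 0 in Ω if and only if E(u,φ) ≥ 0 (resp. E(u,φ) ≤ 0) holds for every nonnegative φ ∈ W^{s,2}_loc(Ω) whose support is a compact subset of Ω (φ being extended by zero outside its support). -/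
/-!
Smooth compactly supported functions belong to `W^{s,2}_loc`, so only one implication has content:
passing from smooth test functions to a nonnegative, compactly supported `φ` in `W^{s,2}_loc(Ω)`.

Let `τ_z φ = φ(· - z)`. The map `z ↦ E(u, τ_z φ)` is continuous near `0`. Indeed, on a product
`G₀ × G₀` of neighbourhoods of the support of `φ`, the integrand is the product of the `L²` function
`(u(x) - u(y)) k(x, y) |x - y|^{(n + 2s)/2}` and a translate along the diagonal of the `L²` function
`(φ(x) - φ(y)) |x - y|^{-(n + 2s)/2}`. When one variable lies outside `G₀` the kernel is nonsingular
and bounded by the tail weight, so integrating that variable out leaves the pairing of `τ_z φ` with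
a fixed `L²` function. Continuity of translations in `L²` applies to both parts. The same
decomposition gives an `L¹` bound uniform in `z`, so Fubini's theorem yields
`E(u, ρ ⋆ φ) = ∫ ρ(z) E(u, τ_z φ) dz` for a mollifier `ρ` with small support. The left side is
nonnegative for a supersolution since `ρ ⋆ φ` is a smooth nonnegative test function, whereas
`E(u, φ) < 0` would make the right side negative. Working with the average directly avoids proving
convergence of `ρ ⋆ φ` to `φ` in the Sobolev norm. Subsolutions are treated by replacing `u`
with `-u`.

The decomposition is `exists_tameFamily`, Fubini's theorem enters through
`TameFamily.integrable_mul`, and the averaging argument is `energyForm_nonneg`.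

The encoded hypotheses make `u` measurable on compact pieces of `Ω` but not necessarily outside
`Ω`. A nonmeasurable `u` is covered by `energyForm_eq_zero`: its energy form vanishes, for
`φ` not almost everywhere zero by the convention for integrals of nonintegrable functions.
-/

open MeasureTheory Metric

noncomputable section

/-- An `(s, Λ)`-admissible kernel on `ℝⁿ`: measurable, symmetric, with two-sided
pointwise bounds `Λ⁻¹|x-y|^{-n-2s} ≤ k(x,y) ≤ Λ|x-y|^{-n-2s}`. -/
def IsAdmissibleKernel (n : ℕ) (s Λ : ℝ)
    (k : EuclideanSpace ℝ (Fin n) → EuclideanSpace ℝ (Fin n) → ℝ) : Prop :=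
  Measurable (Function.uncurry k) ∧
  (∀ x y, k x y = k y x) ∧
  ∀ x y : EuclideanSpace ℝ (Fin n), x ≠ y →
    Λ⁻¹ * ‖x - y‖ ^ (-(n : ℝ) - 2 * s) ≤ k x y ∧
      k x y ≤ Λ * ‖x - y‖ ^ (-(n : ℝ) - 2 * s)

/-- The nonlocal bilinear energy form `E(u, φ) = ∫∫ (u(x)-u(y))(φ(x)-φ(y)) k(x,y) dy dx`. -/
def energyForm (n : ℕ) (k : EuclideanSpace ℝ (Fin n) → EuclideanSpace ℝ (Fin n) → ℝ)
    (u φ : EuclideanSpace ℝ (Fin n) → ℝ) : ℝ :=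
  ∫ x, ∫ y, (u x - u y) * (φ x - φ y) * k x y

/-- Membership in the tail space `L¹_{2s}(ℝⁿ)`. -/
def MemTailSpace (n : ℕ) (s : ℝ) (u : EuclideanSpace ℝ (Fin n) → ℝ) : Prop :=
  Integrable (fun y => |u y| * (1 + ‖y‖) ^ (-(n : ℝ) - 2 * s))

/-- Membership in `W^{s,2}_loc(Ω)`. -/
def MemWs2Loc (n : ℕ) (s : ℝ) (Ω : Set (EuclideanSpace ℝ (Fin n)))
    (u : EuclideanSpace ℝ (Fin n) → ℝ) : Prop :=
  ∀ G : Set (EuclideanSpace ℝ (Fin n)), IsOpen G → IsCompact (closure G) → closure G ⊆ Ω →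
    IntegrableOn (fun x => |u x| ^ 2) G volume ∧
    IntegrableOn
      (fun p : EuclideanSpace ℝ (Fin n) × EuclideanSpace ℝ (Fin n) =>
        |u p.1 - u p.2| ^ 2 * ‖p.1 - p.2‖ ^ (-(n : ℝ) - 2 * s)) (G ×ˢ G) volume

/-- `u` is a weak supersolution of `Lu = f` in `Ω`. -/
def IsWeakSupersolution (n : ℕ) (s : ℝ)
    (k : EuclideanSpace ℝ (Fin n) → EuclideanSpace ℝ (Fin n) → ℝ)
    (Ω : Set (EuclideanSpace ℝ (Fin n))) (f u : EuclideanSpace ℝ (Fin n) → ℝ) : Prop :=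
  MemWs2Loc n s Ω u ∧ MemTailSpace n s u ∧
  ∀ φ : EuclideanSpace ℝ (Fin n) → ℝ,
    ContDiff ℝ (⊤ : ℕ∞) φ → HasCompactSupport φ → tsupport φ ⊆ Ω → (∀ x, 0 ≤ φ x) →
    (∫ x in Ω, f x * φ x) ≤ energyForm n k u φ

/-- `u` is a weak subsolution of `Lu = f` in `Ω`. -/
def IsWeakSubsolution (n : ℕ) (s : ℝ)
    (k : EuclideanSpace ℝ (Fin n) → EuclideanSpace ℝ (Fin n) → ℝ)
    (Ω : Set (EuclideanSpace ℝ (Fin n))) (f u : EuclideanSpace ℝ (Fin n) → ℝ) : Prop :=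
  MemWs2Loc n s Ω u ∧ MemTailSpace n s u ∧
  ∀ φ : EuclideanSpace ℝ (Fin n) → ℝ,
    ContDiff ℝ (⊤ : ℕ∞) φ → HasCompactSupport φ → tsupport φ ⊆ Ω → (∀ x, 0 ≤ φ x) →
    energyForm n k u φ ≤ ∫ x in Ω, f x * φ x

/-- `u` is a weak solution of `Lu = f` in `Ω`. -/
def IsWeakSolution (n : ℕ) (s : ℝ)
    (k : EuclideanSpace ℝ (Fin n) → EuclideanSpace ℝ (Fin n) → ℝ)
    (Ω : Set (EuclideanSpace ℝ (Fin n))) (f u : EuclideanSpace ℝ (Fin n) → ℝ) : Prop :=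
  MemWs2Loc n s Ω u ∧ MemTailSpace n s u ∧
  ∀ φ : EuclideanSpace ℝ (Fin n) → ℝ,
    ContDiff ℝ (⊤ : ℕ∞) φ → HasCompactSupport φ → tsupport φ ⊆ Ω →
    energyForm n k u φ = ∫ x in Ω, f x * φ x

/-- The nonlocal tail `Tail(u; x₀, r)`. -/
def Tail (n : ℕ) (s : ℝ) (u : EuclideanSpace ℝ (Fin n) → ℝ)
    (x0 : EuclideanSpace ℝ (Fin n)) (r : ℝ) : ℝ :=
  r ^ (2 * s) * ∫ y in (ball x0 r)ᶜ, |u y| * ‖y - x0‖ ^ (-(n : ℝ) - 2 * s)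

/-- The negative part `u₋ = max(-u, 0)`. -/
def negPart (n : ℕ) (u : EuclideanSpace ℝ (Fin n) → ℝ) : EuclideanSpace ℝ (Fin n) → ℝ :=
  fun x => max (-u x) 0

section

open Filter Topology Set Function

/-! ### Pairings with translated functions -/

/-- The `L²` pairing of `f` with `g ∘ T z` is continuous in `z`: composition with a continuous
family of measure preserving maps is strongly continuous on `L²`. -/
theorem continuous_integral_mul_comp {X Z : Type*} [TopologicalSpace X] [R1Space X]
    [MeasurableSpace X] [BorelSpace X] [TopologicalSpace Z] {μ : Measure X}
    [μ.InnerRegularCompactLTTop] [IsLocallyFiniteMeasure μ] {f g : X → ℝ}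
    (hf : MemLp f 2 μ) (hg : MemLp g 2 μ) (T : Z → C(X, X)) (hT : Continuous T)
    (hm : ∀ z, MeasurePreserving (T z) μ μ) :
    Continuous fun z => ∫ x, f x * g (T z x) ∂μ := by
  have h1 : Continuous fun z =>
      inner ℝ (Lp.compMeasurePreserving (T z) (hm z) (hg.toLp g)) (hf.toLp f) :=
    ((continuous_const (y := hg.toLp g)).compMeasurePreservingLp hT hm (by simp)).inner
      continuous_const
  refine h1.congr fun z => ?_
  rw [L2.inner_def]
  refine integral_congr_ae ?_
  have h2 := Lp.coeFn_compMeasurePreserving (hg.toLp g) (hm z)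
  have h3 := (hm z).quasiMeasurePreserving.ae_eq_comp hg.coeFn_toLp
  filter_upwards [h2, h3, hf.coeFn_toLp] with x h2 h3 h4
  rw [h2, h4, h3]
  simp

theorem integral_abs_mul_le {X : Type*} [MeasurableSpace X] {μ : Measure X} {f g : X → ℝ}
    (hf : MemLp f 2 μ) (hg : MemLp g 2 μ) :
    ∫ x, |f x * g x| ∂μ ≤ ((∫ x, f x ^ 2 ∂μ) + ∫ x, g x ^ 2 ∂μ) / 2 := by
  rw [← integral_add hf.integrable_sq hg.integrable_sq, ← integral_div]
  refine integral_mono (hf.integrable_mul hg).abs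
    ((hf.integrable_sq.add hg.integrable_sq).div_const 2) fun x => ?_
  rw [abs_mul]
  simp only
  nlinarith [sq_nonneg (|f x| - |g x|), sq_abs (f x), sq_abs (g x)]

/-- A family `T z` of integrable functions on `E × E`, indexed by `z : E`, that can be averaged over
`z`: it is jointly measurable, bounded in `L¹` uniformly in `z`, and its integral is continuous
in `z`. -/
structure TameFamily {E : Type*} [TopologicalSpace E] [MeasureSpace E]
    (T : E → E × E → ℝ) : Prop where
  meas : AEStronglyMeasurable (uncurry T) (volume.prod volume)
  integrable : ∀ z, Integrable (T z)
  bdd : ∃ M, ∀ z, ∫ p, |T z p| ≤ M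
  cont : Continuous fun z => ∫ p, T z p

variable {E : Type*} [NormedAddCommGroup E] [InnerProductSpace ℝ E] [FiniteDimensional ℝ E]
  [MeasurableSpace E] [BorelSpace E]

theorem TameFamily.add {S T : E → E × E → ℝ} (hS : TameFamily S) (hT : TameFamily T) :
    TameFamily fun z p => S z p + T z p := by
  obtain ⟨M, hM⟩ := hS.bdd
  obtain ⟨N, hN⟩ := hT.bdd
  refine ⟨hS.meas.add hT.meas, fun z => (hS.integrable z).add (hT.integrable z),
    ⟨M + N, fun z => ?_⟩, ?_⟩
  · calc _ ≤ ∫ p, (|S z p| + |T z p|) :=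
        integral_mono ((hS.integrable z).add (hT.integrable z)).abs
          ((hS.integrable z).abs.add (hT.integrable z).abs) fun p => abs_add_le _ _
      _ ≤ M + N := by
        rw [integral_add (hS.integrable z).abs (hT.integrable z).abs]
        exact add_le_add (hM z) (hN z)
  · refine (hS.cont.add hT.cont).congr fun z => ?_
    exact (integral_add (hS.integrable z) (hT.integrable z)).symm

theorem TameFamily.swap {T : E → E × E → ℝ} (hT : TameFamily T) :
    TameFamily fun z p => T z p.swap := by
  have hsw : MeasurePreserving (Prod.swap : E × E → E × E) volume volume :=
    Measure.measurePreserving_swap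
  have hemb : MeasurableEmbedding (Prod.swap : E × E → E × E) :=
    MeasurableEquiv.prodComm.measurableEmbedding
  obtain ⟨M, hM⟩ := hT.bdd
  refine ⟨?_, fun z => (hT.integrable z).swap, ⟨M, fun z => ?_⟩, ?_⟩
  · exact hT.meas.comp_quasiMeasurePreserving
      (((MeasurePreserving.id volume).prod hsw).quasiMeasurePreserving)
  · rw [hsw.integral_comp hemb (fun p => |T z p|)]
    exact hM z
  · refine hT.cont.congr fun z => (hsw.integral_comp hemb (T z)).symm

/-- Near-diagonal part: an `L²` function on `E × E` times the diagonal translates of another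
one. -/
theorem tame_bulk {H D : E × E → ℝ} (hH : MemLp H 2) (hD : MemLp D 2) :
    TameFamily fun (z : E) p => H p * D (p - (z, z)) := by
  have : (volume : Measure (E × E)).IsAddRightInvariant :=
    inferInstanceAs ((volume : Measure E).prod volume).IsAddRightInvariant
  have hmp : ∀ z : E, MeasurePreserving (fun p : E × E => p - (z, z)) volume volume :=
    fun z => measurePreserving_sub_right _ _
  have hDz : ∀ z : E, MemLp (fun p => D (p - (z, z))) 2 :=
    fun z => hD.comp_measurePreserving (hmp z)
  refine ⟨?_, fun z => hH.integrable_mul (hDz z),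
    ⟨((∫ p, H p ^ 2) + ∫ p, D p ^ 2) / 2, fun z => ?_⟩, ?_⟩
  · refine AEStronglyMeasurable.mul (f := fun q : E × (E × E) => H q.2)
      (g := fun q : E × (E × E) => D (q.2 - (q.1, q.1)))
      hH.1.comp_snd ?_
    have h1 : MeasurePreserving (fun q : E × (E × E) => (q.1, q.2 - (q.1, q.1)))
        (volume.prod volume) (volume.prod volume) := by
      refine (MeasurePreserving.id volume).skew_product (g := fun z p => p - (z, z))
        (by fun_prop) (Eventually.of_forall fun z => (hmp z).map_eq)
    exact (hD.1.comp_snd (μ := volume)).comp_quasiMeasurePreserving h1.quasiMeasurePreserving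
  · refine (integral_abs_mul_le hH (hDz z)).trans_eq ?_
    rw [integral_sub_right_eq_self (fun p => D p ^ 2) (z, z)]
  · refine continuous_integral_mul_comp hH hD
      (fun z => ⟨fun p => p - (z, z), by fun_prop⟩) ?_ hmp
    refine ContinuousMap.continuous_of_continuous_uncurry _ ?_
    simp only [uncurry_def, ContinuousMap.coe_mk]
    fun_prop

/-- Off-diagonal part. The weight `b` has no singularity and is dominated by a product `c ⊗ a`, where
`c` localizes the first variable and `a` is a decaying weight against which `u` is integrable.
Hence integrating out the second variable leaves an `L²` function of the first one, which is
paired with the translate of `φ`. -/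
theorem tame_cross {u φ a c : E → ℝ} {b : E × E → ℝ} (hu : AEStronglyMeasurable u)
    (hb : AEStronglyMeasurable b) (hbd : ∀ p, |b p| ≤ c p.1 * a p.2)
    (ha0 : ∀ y, 0 ≤ a y) (hc0 : ∀ y, 0 ≤ c y)
    (hφ : MemLp φ 2) (hc : MemLp c 2) (hcu : MemLp (fun x => c x * u x) 2)
    (ha : Integrable a) (hua : Integrable fun y => |u y| * a y) :
    TameFamily fun (z : E) p => (u p.1 - u p.2) * b p * φ (p.1 - z) := by
  have hφz : ∀ z : E, MemLp (fun x => φ (x - z)) 2 := fun z =>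
    hφ.comp_measurePreserving (measurePreserving_sub_right volume z)
  have hφsq : ∀ z : E, ∫ x, φ (x - z) ^ 2 = ∫ x, φ x ^ 2 := fun z =>
    integral_sub_right_eq_self (fun x => φ x ^ 2) z
  have hub : AEStronglyMeasurable (fun p : E × E => (u p.1 - u p.2) * b p)
      (volume.prod volume) := (hu.comp_fst.sub hu.comp_snd).mul hb
  have hbound : ∀ p : E × E,
      |(u p.1 - u p.2) * b p| ≤ |c p.1 * u p.1| * a p.2 + c p.1 * (|u p.2| * a p.2) := by
    intro p
    rw [abs_mul, abs_mul, abs_of_nonneg (hc0 p.1)]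
    calc _ ≤ (|u p.1| + |u p.2|) * (c p.1 * a p.2) :=
          mul_le_mul (abs_sub _ _) (hbd p) (abs_nonneg _) (by positivity)
      _ = _ := by ring
  have hmaj : ∀ z : E, Integrable (fun p : E × E =>
      |c p.1 * u p.1 * φ (p.1 - z)| * a p.2 + |c p.1 * φ (p.1 - z)| * (|u p.2| * a p.2))
      (volume.prod volume) := fun z =>
    ((hcu.integrable_mul (hφz z)).abs.mul_prod ha).add
      ((hc.integrable_mul (hφz z)).abs.mul_prod hua)
  have hle : ∀ (z : E) (p : E × E), |(u p.1 - u p.2) * b p * φ (p.1 - z)| ≤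
      |c p.1 * u p.1 * φ (p.1 - z)| * a p.2 + |c p.1 * φ (p.1 - z)| * (|u p.2| * a p.2) := by
    intro z p
    rw [abs_mul, abs_mul (c p.1 * u p.1), abs_mul (c p.1) (φ _), abs_of_nonneg (hc0 p.1)]
    calc _ ≤ _ := mul_le_mul_of_nonneg_right (hbound p) (abs_nonneg (φ (p.1 - z)))
      _ = _ := by ring
  have hint : ∀ z : E, Integrable (fun p : E × E => (u p.1 - u p.2) * b p * φ (p.1 - z))
      (volume.prod volume) := fun z =>
    (hmaj z).mono' (hub.mul (hφz z).1.comp_fst) (Eventually.of_forall (hle z))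
  refine ⟨?_, hint, ⟨((∫ x, (c x * u x) ^ 2) + ∫ x, φ x ^ 2) / 2 * (∫ y, a y) +
      ((∫ x, c x ^ 2) + ∫ x, φ x ^ 2) / 2 * ∫ y, |u y| * a y, fun z => ?_⟩, ?_⟩
  · have h1 : AEStronglyMeasurable (fun q : E × (E × E) => φ (q.2.1 - q.1))
        (volume.prod (volume.prod volume)) := by
      have h2 : MeasurePreserving (fun q : E × E => (q.1, q.2 - q.1))
          (volume.prod volume) (volume.prod volume) := measurePreserving_prod_sub _ _
      have h3 : AEStronglyMeasurable (fun q : E × E => φ (q.2 - q.1)) (volume.prod volume) :=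
        (hφ.1.comp_snd (μ := volume)).comp_quasiMeasurePreserving h2.quasiMeasurePreserving
      have h4 : Measure.QuasiMeasurePreserving (fun q : E × (E × E) => (q.1, q.2.1))
          (volume.prod (volume.prod volume)) (volume.prod volume) :=
        Measure.quasiMeasurePreserving_fst.comp
          (measurePreserving_prodAssoc volume volume volume).symm.quasiMeasurePreserving
      exact h3.comp_quasiMeasurePreserving h4
    exact (hub.comp_snd).mul h1
  · refine (integral_mono (hint z).abs (hmaj z) (hle z)).trans ?_
    have e := integral_add ((hcu.integrable_mul (hφz z)).abs.mul_prod ha)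
      ((hc.integrable_mul (hφz z)).abs.mul_prod hua)
    refine e.trans_le ?_
    have e1 := integral_prod_mul (μ := (volume : Measure E)) (ν := (volume : Measure E))
      (fun x => |c x * u x * φ (x - z)|) a
    have e2 := integral_prod_mul (μ := (volume : Measure E)) (ν := (volume : Measure E))
      (fun x => |c x * φ (x - z)|) (fun y => |u y| * a y)
    refine (congrArg₂ (· + ·) e1 e2).trans_le ?_
    have i1 := integral_abs_mul_le hcu (hφz z)
    have i2 := integral_abs_mul_le hc (hφz z)
    rw [hφsq z] at i1 i2
    exact add_le_add (mul_le_mul_of_nonneg_right i1 (integral_nonneg ha0))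
      (mul_le_mul_of_nonneg_right i2
        (integral_nonneg fun y => mul_nonneg (abs_nonneg _) (ha0 y)))
  · -- Integrating out the second variable leaves a pairing of `φ` with a fixed `L²` function.
    have hW : MemLp (fun x => ∫ y, (u x - u y) * b (x, y)) 2 := by
      refine MemLp.mono' (g := fun x => |c x * u x| * (∫ y, a y) + c x * ∫ y, |u y| * a y)
        ((hcu.abs.mul_const _).add (hc.mul_const _)) hub.integral_prod_right' ?_
      refine Eventually.of_forall fun x => ?_
      rw [← integral_const_mul, ← integral_const_mul,
        ← integral_add (ha.const_mul _) (hua.const_mul _)]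
      exact norm_integral_le_of_norm_le ((ha.const_mul _).add (hua.const_mul _))
        (Eventually.of_forall fun y => hbound (x, y))
    refine (continuous_integral_mul_comp hW hφ
      (fun z : E => ⟨fun x => x - z, by fun_prop⟩) ?_
      (fun z => measurePreserving_sub_right volume z)).congr fun z => ?_
    · refine ContinuousMap.continuous_of_continuous_uncurry _ ?_
      simp only [uncurry_def, ContinuousMap.coe_mk]
      fun_prop
    · refine Eq.trans ?_ (integral_prod _ (hint z)).symm
      refine integral_congr_ae (Eventually.of_forall fun x => ?_)
      exact (integral_mul_const _ _).symm

/-- The Fubini condition needed to average a tame family against an integrable weight. -/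
theorem TameFamily.integrable_mul {T : E → E × E → ℝ} (hT : TameFamily T) {ρ : E → ℝ}
    (hρ : Integrable ρ) :
    Integrable (fun q : E × (E × E) => ρ q.1 * T q.1 q.2) (volume.prod volume) := by
  obtain ⟨M, hM⟩ := hT.bdd
  have hm : AEStronglyMeasurable (fun q : E × (E × E) => ρ q.1 * T q.1 q.2)
      (volume.prod volume) := hρ.1.comp_fst.mul hT.meas
  rw [integrable_prod_iff hm]
  refine ⟨Eventually.of_forall fun z => (hT.integrable z).const_mul (ρ z), ?_⟩
  refine (hρ.abs.mul_const M).mono' hm.norm.integral_prod_right' (Eventually.of_forall fun z => ?_)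
  rw [Real.norm_of_nonneg (integral_nonneg fun _ => norm_nonneg _)]
  simp only [norm_mul, Real.norm_eq_abs]
  rw [integral_const_mul]
  exact mul_le_mul_of_nonneg_left (hM z) (abs_nonneg _)

/-! ### Local Sobolev functions -/

/-- The definition of `MemWs2Loc` only provides measurability of `|v|²` and of the Gagliardo
integrand. Since `2 v(x) v(y) = v(x)² + v(y)² - |v(x) - v(y)|²`, fixing one good point `x` with
`v x ≠ 0` recovers the measurability of `v` itself. -/
theorem aestronglyMeasurable_of_energy {n : ℕ} (hn : 1 ≤ n) {e : ℝ}
    {v : EuclideanSpace ℝ (Fin n) → ℝ} {G : Set (EuclideanSpace ℝ (Fin n))}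
    (h1 : AEStronglyMeasurable (fun x => |v x| ^ 2) (volume.restrict G))
    (h2 : AEStronglyMeasurable
      (fun p : EuclideanSpace ℝ (Fin n) × EuclideanSpace ℝ (Fin n) =>
        |v p.1 - v p.2| ^ 2 * ‖p.1 - p.2‖ ^ e) (volume.restrict (G ×ˢ G))) :
    AEStronglyMeasurable v (volume.restrict G) := by
  have : Nonempty (Fin n) := ⟨⟨0, hn⟩⟩
  by_cases h0 : ∀ᵐ x ∂volume.restrict G, v x = 0
  · exact aestronglyMeasurable_const.congr (h0.mono fun x hx => hx.symm)
  have h3 : AEStronglyMeasurable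
      (fun p : EuclideanSpace ℝ (Fin n) × EuclideanSpace ℝ (Fin n) =>
        |v p.1 - v p.2| ^ 2 * ‖p.1 - p.2‖ ^ e)
      ((volume.restrict G).prod (volume.restrict G)) := by
    rw [Measure.prod_restrict]; exact h2
  -- Fix a point `x` with `v x ≠ 0` whose slice is measurable, and solve for `v y`.
  obtain ⟨x, hx0, hx⟩ := ((not_eventually.1 h0).and_eventually h3.prodMk_left).exists
  simp only at hx
  have hw : AEMeasurable (fun y : EuclideanSpace ℝ (Fin n) => ‖x - y‖ ^ e)
      (volume.restrict G) := by fun_prop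
  have hne : ∀ᵐ y ∂(volume.restrict G : Measure (EuclideanSpace ℝ (Fin n))), y ≠ x :=
    ae_restrict_of_ae (Measure.ae_ne volume x)
  have h4 : AEMeasurable (fun y => (v x ^ 2 + |v y| ^ 2 -
      (|v x - v y| ^ 2 * ‖x - y‖ ^ e) / ‖x - y‖ ^ e) / (2 * v x)) (volume.restrict G) :=
    ((aemeasurable_const.add h1.aemeasurable).sub (hx.aemeasurable.div hw)).div_const _
  refine (h4.congr (hne.mono fun y hy => ?_)).aestronglyMeasurable
  have hpos : 0 < ‖x - y‖ ^ e := Real.rpow_pos_of_pos (norm_pos_iff.2 (sub_ne_zero.2 hy.symm)) _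
  have hx0' : v x ≠ 0 := hx0
  simp only [sq_abs]
  field_simp
  ring

/-- For `x` in a bounded set and `y` at a definite distance from `x`, a negative power of `‖x - y‖`
is comparable to the tail weight `(1 + ‖y‖) ^ e`. -/
theorem rpow_le_tail_weight {E : Type*} [NormedAddCommGroup E] {R d e : ℝ} (hR : 0 ≤ R)
    (hd : 0 < d) (he : e ≤ 0) :
    ∃ C, 0 ≤ C ∧ ∀ x y : E, ‖x‖ ≤ R → d ≤ ‖x - y‖ → ‖x - y‖ ^ e ≤ C * (1 + ‖y‖) ^ e := by
  have hC : 0 < (1 + R) / d + 1 := by positivity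
  refine ⟨((1 + R) / d + 1) ^ (-e), by positivity, fun x y hx hxy => ?_⟩
  have h1 : 1 + ‖y‖ ≤ ((1 + R) / d + 1) * ‖x - y‖ := by
    have h2 : ‖y‖ ≤ ‖x‖ + ‖x - y‖ := by
      have := norm_sub_le x (x - y)
      rwa [sub_sub_cancel] at this
    have h3 : 1 + R ≤ (1 + R) / d * ‖x - y‖ := by
      rw [div_mul_eq_mul_div, le_div_iff₀ hd]
      exact mul_le_mul_of_nonneg_left hxy (by linarith)
    linarith
  have h4 := Real.rpow_le_rpow_of_nonpos (by positivity) h1 he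
  rw [Real.mul_rpow hC.le (norm_nonneg _)] at h4
  calc ‖x - y‖ ^ e = ((1 + R) / d + 1) ^ (-e) * (((1 + R) / d + 1) ^ e * ‖x - y‖ ^ e) := by
        rw [← mul_assoc, ← Real.rpow_add hC]; simp
    _ ≤ _ := mul_le_mul_of_nonneg_left h4 (by positivity)

theorem memLp_energy {n : ℕ} {e : ℝ} {v : EuclideanSpace ℝ (Fin n) → ℝ}
    {G : Set (EuclideanSpace ℝ (Fin n))} (hG : MeasurableSet G) (hv : AEStronglyMeasurable v)
    (h : IntegrableOn (fun p : EuclideanSpace ℝ (Fin n) × EuclideanSpace ℝ (Fin n) =>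
        |v p.1 - v p.2| ^ 2 * ‖p.1 - p.2‖ ^ e) (G ×ˢ G) volume) :
    MemLp ((G ×ˢ G).indicator fun p : EuclideanSpace ℝ (Fin n) × EuclideanSpace ℝ (Fin n) =>
      (v p.1 - v p.2) * ‖p.1 - p.2‖ ^ (e / 2)) 2 := by
  have hm : AEStronglyMeasurable
      (fun p : EuclideanSpace ℝ (Fin n) × EuclideanSpace ℝ (Fin n) =>
        (v p.1 - v p.2) * ‖p.1 - p.2‖ ^ (e / 2)) (volume.prod volume) :=
    (hv.comp_fst.sub hv.comp_snd).mul (Measurable.aestronglyMeasurable (by fun_prop))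
  refine (memLp_two_iff_integrable_sq (hm.indicator (hG.prod hG))).2 ?_
  refine ((integrable_indicator_iff (hG.prod hG)).2 h).congr (Eventually.of_forall fun p => ?_)
  by_cases hp : p ∈ G ×ˢ G
  · simp only [indicator_of_mem hp, sq_abs, mul_pow]
    rw [← Real.rpow_natCast (‖p.1 - p.2‖ ^ (e / 2)), ← Real.rpow_mul (norm_nonneg _)]
    norm_num
  · simp [indicator_of_notMem hp]

/-- Smooth compactly supported functions are Lipschitz, so their Gagliardo integrand is at most a
multiple of `‖x - y‖ ^ (2 - n - 2s)`, which is locally integrable. -/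
theorem memWs2Loc_of_contDiff {n : ℕ} (hn : 1 ≤ n) {s : ℝ} (hs1 : s < 1)
    {Ω : Set (EuclideanSpace ℝ (Fin n))} {φ : EuclideanSpace ℝ (Fin n) → ℝ}
    (hφ : ContDiff ℝ (⊤ : ℕ∞) φ) (hc : HasCompactSupport φ) : MemWs2Loc n s Ω φ := by
  intro G hGo hGc _
  have : Nonempty (Fin n) := ⟨⟨0, hn⟩⟩
  refine ⟨((hφ.continuous.abs.pow 2).continuousOn.integrableOn_compact hGc).mono_set
    subset_closure, ?_⟩
  obtain ⟨L, hL⟩ := hφ.lipschitzWith_of_hasCompactSupport hc (by simp)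
  obtain ⟨R, hR⟩ := hGc.isBounded.exists_norm_le
  have hGm := hGo.measurableSet
  -- The local singularity is `|x - y| ^ (2 - n - 2s)`, which is integrable because `s < 1`.
  have h1 : Integrable ((ball 0 (2 * R + 1)).indicator
      fun h : EuclideanSpace ℝ (Fin n) => (L : ℝ) ^ 2 * ‖h‖ ^ (-((n : ℝ) + 2 * s - 2))) := by
    refine (integrable_indicator_iff measurableSet_ball).2 ?_
    refine integrableOn_ball_of_norm_le_rpow (C := (L : ℝ) ^ 2) (α := (n : ℝ) + 2 * s - 2)
      (by simpa using hn) (by simp; linarith) (Eventually.of_forall fun x => ?_)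
      (Measurable.aestronglyMeasurable (by fun_prop))
    rw [Real.norm_of_nonneg (by positivity)]
  have h2 : Integrable (G.indicator fun _ => (1 : ℝ)) :=
    (integrable_indicator_iff hGm).2 (integrableOn_const
      ((measure_mono subset_closure).trans_lt hGc.measure_lt_top).ne)
  have h3 := (h2.convolution_integrand (ContinuousLinearMap.mul ℝ ℝ) h1).restrict (s := G ×ˢ G)
  refine h3.mono' (Measurable.aestronglyMeasurable ?_) ?_
  · have := hφ.continuous.measurable
    fun_prop
  · refine (ae_restrict_iff' (hGm.prod hGm)).2 (Eventually.of_forall fun p hp => ?_)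
    have hb : p.1 - p.2 ∈ ball (0 : EuclideanSpace ℝ (Fin n)) (2 * R + 1) := by
      rw [mem_ball_zero_iff]
      have := norm_sub_le p.1 p.2
      have := hR _ (subset_closure hp.1)
      have := hR _ (subset_closure hp.2)
      linarith
    simp only [ContinuousLinearMap.mul_apply', indicator_of_mem hb, indicator_of_mem hp.2, one_mul]
    rw [Real.norm_of_nonneg (by positivity)]
    rcases eq_or_ne p.1 p.2 with h | h
    · simp only [h, sub_self, abs_zero]
      rw [zero_pow two_ne_zero, zero_mul]
      positivity
    have hpos : 0 < ‖p.1 - p.2‖ := norm_pos_iff.2 (sub_ne_zero.2 h)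
    have hlip : |φ p.1 - φ p.2| ≤ L * ‖p.1 - p.2‖ := by
      have := hL.dist_le_mul p.1 p.2
      rwa [Real.dist_eq, dist_eq_norm] at this
    calc _ ≤ (L * ‖p.1 - p.2‖) ^ 2 * ‖p.1 - p.2‖ ^ (-(n : ℝ) - 2 * s) := by gcongr
      _ = (L : ℝ) ^ 2 * (‖p.1 - p.2‖ ^ (2 : ℝ) * ‖p.1 - p.2‖ ^ (-(n : ℝ) - 2 * s)) := by
        rw [mul_pow, mul_assoc, Real.rpow_two]
      _ = _ := by
        rw [← Real.rpow_add hpos]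
        congr 2
        ring

theorem MemWs2Loc.aestronglyMeasurable {n : ℕ} (hn : 1 ≤ n) {s : ℝ}
    {Ω G : Set (EuclideanSpace ℝ (Fin n))} {v : EuclideanSpace ℝ (Fin n) → ℝ}
    (hv : MemWs2Loc n s Ω v) (hG : IsOpen G) (hGc : IsCompact (closure G)) (hGΩ : closure G ⊆ Ω) :
    AEStronglyMeasurable v (volume.restrict G) :=
  aestronglyMeasurable_of_energy hn (hv G hG hGc hGΩ).1.1 (hv G hG hGc hGΩ).2.1

theorem memLp_indicator {n : ℕ} (hn : 1 ≤ n) {s : ℝ}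
    {Ω G : Set (EuclideanSpace ℝ (Fin n))} {v : EuclideanSpace ℝ (Fin n) → ℝ}
    (hv : MemWs2Loc n s Ω v) (hG : IsOpen G) (hGc : IsCompact (closure G)) (hGΩ : closure G ⊆ Ω) :
    MemLp (G.indicator v) 2 := by
  rw [memLp_indicator_iff_restrict hG.measurableSet,
    memLp_two_iff_integrable_sq (hv.aestronglyMeasurable hn hG hGc hGΩ)]
  simpa only [sq_abs] using (hv G hG hGc hGΩ).1.integrable

theorem IsAdmissibleKernel.pos {n : ℕ} {s Λ : ℝ} (hΛ : 1 ≤ Λ)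
    {k : EuclideanSpace ℝ (Fin n) → EuclideanSpace ℝ (Fin n) → ℝ}
    (hk : IsAdmissibleKernel n s Λ k) {x y : EuclideanSpace ℝ (Fin n)} (hxy : x ≠ y) :
    0 < k x y := by
  have : 0 < ‖x - y‖ := norm_pos_iff.2 (sub_ne_zero.2 hxy)
  exact lt_of_lt_of_le (by positivity) (hk.2.2 x y hxy).1

/-! ### The energy against translates of the test function -/

/-- For small `z`, the integrand of `E(u, φ(· - z))` agrees everywhere with a tame family. With
neighbourhoods `K' ⊆ G₀` of the support of `φ`, the integrand splits into the part on `G₀ × G₀`,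
which is a product of two `L²` functions by the local Sobolev bounds, and the parts with exactly
one variable outside `G₀`, where the kernel is bounded by the tail weight. It vanishes when both
variables are outside `G₀`. -/
theorem exists_tameFamily {n : ℕ} (hn : 1 ≤ n) {s Λ : ℝ} (hs0 : 0 < s) (hΛ : 1 ≤ Λ)
    {k : EuclideanSpace ℝ (Fin n) → EuclideanSpace ℝ (Fin n) → ℝ}
    (hk : IsAdmissibleKernel n s Λ k) {Ω : Set (EuclideanSpace ℝ (Fin n))} (hΩ : IsOpen Ω)
    {u φ : EuclideanSpace ℝ (Fin n) → ℝ} (hu1 : MemWs2Loc n s Ω u) (hu2 : MemTailSpace n s u)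
    (hu : AEStronglyMeasurable u) (hφ : MemWs2Loc n s Ω φ) (hφc : HasCompactSupport φ)
    (hφΩ : tsupport φ ⊆ Ω) :
    MemLp φ 2 ∧ ∃ T : EuclideanSpace ℝ (Fin n) → _ → ℝ, TameFamily T ∧
      ∃ ε, 0 < ε ∧ cthickening ε (tsupport φ) ⊆ Ω ∧ ∀ z, ‖z‖ < ε → ∀ p,
        T z p = (u p.1 - u p.2) * (φ (p.1 - z) - φ (p.2 - z)) * k p.1 p.2 := by
  obtain ⟨hkm, hks, hkb⟩ := hk
  set e : ℝ := -(n : ℝ) - 2 * s with he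
  have hn' : (1 : ℝ) ≤ n := by exact_mod_cast hn
  have he0 : e ≤ 0 := by rw [he]; linarith
  set K := tsupport φ with hK
  have hKc : IsCompact K := hφc
  obtain ⟨δ, hδ, hδΩ⟩ := hKc.exists_cthickening_subset_open hΩ hφΩ
  -- `K' ⊆ G₀ ⊆ G` are neighbourhoods of the support of `φ`, each leaving room for translations.
  set G := thickening δ K with hGdef
  set G₀ := thickening (δ / 2) K with hG₀def
  set K' := thickening (δ / 4) K with hK'def
  have hGsub : closure G ⊆ cthickening δ K := closure_thickening_subset_cthickening δ K
  have hGo : IsOpen G := isOpen_thickening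
  have hG₀o : IsOpen G₀ := isOpen_thickening
  have hK'o : IsOpen K' := isOpen_thickening
  have hGc : IsCompact (closure G) := hKc.cthickening.of_isClosed_subset isClosed_closure hGsub
  have hGΩ : closure G ⊆ Ω := hGsub.trans hδΩ
  have hK'G₀ : K' ⊆ G₀ := thickening_mono (by linarith) K
  have hG₀G : G₀ ⊆ G := thickening_mono (by linarith) K
  have hG₀c : IsCompact (closure G₀) := hGc.of_isClosed_subset isClosed_closure (closure_mono hG₀G)
  have hG₀Ω : closure G₀ ⊆ Ω := (closure_mono hG₀G).trans hGΩ
  have hKG : K ⊆ G := self_subset_thickening hδ K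
  have hφ0 : ∀ x, x ∉ K → φ x = 0 := fun x hx => image_eq_zero_of_notMem_tsupport hx
  have hshift : ∀ x z, ‖z‖ < δ / 4 → x ∉ K' → φ (x - z) = 0 := by
    intro x z hz hx
    refine hφ0 _ fun hxz => hx (mem_thickening_iff.2 ⟨x - z, hxz, ?_⟩)
    rwa [dist_eq_norm, sub_sub_cancel]
  have hG₀shift : ∀ x z, ‖z‖ < δ / 4 → x ∈ G₀ → x - z ∈ G := by
    intro x z hz hx
    obtain ⟨y, hy, hxy⟩ := mem_thickening_iff.1 hx
    refine mem_thickening_iff.2 ⟨y, hy, ?_⟩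
    have h1 : dist (x - z) x = ‖z‖ := by rw [dist_eq_norm]; simp
    linarith [dist_triangle (x - z) x y]
  have hsep : ∀ x y, x ∈ K' → y ∉ G₀ → δ / 4 ≤ ‖x - y‖ := by
    intro x y hx hy
    obtain ⟨w, hw, hxw⟩ := mem_thickening_iff.1 hx
    by_contra! hlt
    refine hy (mem_thickening_iff.2 ⟨w, hw, ?_⟩)
    rw [← dist_eq_norm, dist_comm] at hlt
    linarith [dist_triangle y x w]
  have hφL : MemLp φ 2 := by
    have h1 := memLp_indicator hn hφ hGo hGc hGΩ
    rwa [indicator_eq_self.2 ((subset_tsupport φ).trans hKG)] at h1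
  refine ⟨hφL, ?_⟩
  have hkm' : AEStronglyMeasurable
      (fun p : EuclideanSpace ℝ (Fin n) × EuclideanSpace ℝ (Fin n) => k p.1 p.2)
      (volume.prod volume) := hkm.aestronglyMeasurable
  -- The near-diagonal part is a pairing of two functions in `L²`.
  have hD := memLp_energy hGo.measurableSet hφL.1 (hφ G hGo hGc hGΩ).2
  have hDu := memLp_energy hG₀o.measurableSet hu (hu1 G₀ hG₀o hG₀c hG₀Ω).2
  rw [← he] at hD hDu
  have hmG₀ := hG₀o.measurableSet.prod hG₀o.measurableSet
  have hH : MemLp ((G₀ ×ˢ G₀).indicator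
      fun p : EuclideanSpace ℝ (Fin n) × EuclideanSpace ℝ (Fin n) =>
        (u p.1 - u p.2) * (k p.1 p.2 / ‖p.1 - p.2‖ ^ (e / 2))) 2 := by
    refine MemLp.mono (hDu.const_mul Λ) (AEStronglyMeasurable.indicator ?_ hmG₀)
      (Eventually.of_forall fun p => ?_)
    · refine AEStronglyMeasurable.mul (f := fun p : EuclideanSpace ℝ (Fin n) ×
        EuclideanSpace ℝ (Fin n) => u p.1 - u p.2) (hu.comp_fst.sub hu.comp_snd) ?_
      exact (hkm.div (f := fun p : EuclideanSpace ℝ (Fin n) ×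
        EuclideanSpace ℝ (Fin n) => k p.1 p.2) (g := fun p => ‖p.1 - p.2‖ ^ (e / 2))
        (by fun_prop)).aestronglyMeasurable
    · by_cases hp : p ∈ G₀ ×ˢ G₀
      · simp only [indicator_of_mem hp]
        rcases eq_or_ne p.1 p.2 with h | h
        · simp [h]
        have hpos : 0 < ‖p.1 - p.2‖ := norm_pos_iff.2 (sub_ne_zero.2 h)
        have hq : 0 < ‖p.1 - p.2‖ ^ (e / 2) := Real.rpow_pos_of_pos hpos _
        have hqq : ‖p.1 - p.2‖ ^ (e / 2) * ‖p.1 - p.2‖ ^ (e / 2) = ‖p.1 - p.2‖ ^ e := by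
          rw [← Real.rpow_add hpos, add_halves]
        have hk0 : 0 < k p.1 p.2 := IsAdmissibleKernel.pos hΛ ⟨hkm, hks, hkb⟩ h
        simp only [norm_mul, norm_div, Real.norm_eq_abs, abs_of_pos hq, abs_of_pos hk0,
          abs_of_nonneg (zero_le_one.trans hΛ)]
        rw [mul_left_comm]
        refine mul_le_mul_of_nonneg_left ?_ (abs_nonneg _)
        rw [div_le_iff₀ hq, mul_assoc, hqq]
        exact (hkb _ _ h).2
      · simp [indicator_of_notMem hp]
  have hA := tame_bulk hH hD
  -- Off the diagonal the kernel is controlled by the tail weight in the second variable.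
  obtain ⟨R, hR⟩ := hG₀c.isBounded.exists_norm_le
  obtain ⟨C, hC0, hC⟩ := rpow_le_tail_weight (E := EuclideanSpace ℝ (Fin n))
    (R := max R 0) (d := δ / 4) (le_max_right _ _) (by linarith) he0
  have hmb : MeasurableSet (K' ×ˢ G₀ᶜ) := hK'o.measurableSet.prod hG₀o.measurableSet.compl
  have hb := hkm'.indicator hmb
  have hc : MemLp (K'.indicator fun _ => Λ * C) 2 :=
    memLp_indicator_const 2 hK'o.measurableSet _ (Or.inr ((measure_mono
      (hK'G₀.trans subset_closure)).trans_lt hG₀c.measure_lt_top).ne)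
  have hΛC : 0 ≤ Λ * C := mul_nonneg (zero_le_one.trans hΛ) hC0
  have hB := tame_cross (u := u) (φ := φ) (a := fun y => (1 + ‖y‖) ^ e)
    (c := K'.indicator fun _ => Λ * C)
    (b := (K' ×ˢ G₀ᶜ).indicator fun p => k p.1 p.2) hu hb ?_ (fun y => by positivity)
    (fun y => indicator_nonneg (fun _ _ => hΛC) y) hφL hc ?_ ?_ hu2
  rotate_left
  · intro p
    by_cases hp : p ∈ K' ×ˢ G₀ᶜ
    · have hd := hsep p.1 p.2 hp.1 hp.2
      have hne : p.1 ≠ p.2 := fun h => hp.2 (h ▸ hK'G₀ hp.1)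
      rw [indicator_of_mem hp, indicator_of_mem hp.1,
        abs_of_pos (IsAdmissibleKernel.pos hΛ ⟨hkm, hks, hkb⟩ hne), mul_assoc]
      refine (hkb _ _ hne).2.trans (mul_le_mul_of_nonneg_left ?_ (zero_le_one.trans hΛ))
      exact hC _ _ ((hR _ (subset_closure (hK'G₀ hp.1))).trans (le_max_left _ _)) hd
    · rw [indicator_of_notMem hp, abs_zero]
      exact mul_nonneg (indicator_nonneg (fun _ _ => hΛC) _) (by positivity)
  · have h1 := ((memLp_indicator hn hu1 hG₀o hG₀c hG₀Ω).indicator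
      hK'o.measurableSet).const_mul (Λ * C)
    refine h1.ae_eq (Eventually.of_forall fun x => ?_)
    by_cases hx : x ∈ K'
    · simp [indicator_of_mem hx, indicator_of_mem (hK'G₀ hx)]
    · simp [indicator_of_notMem hx]
  · have h1 := integrable_one_add_norm (E := EuclideanSpace ℝ (Fin n)) (μ := volume)
      (r := (n : ℝ) + 2 * s) (by simp; linarith)
    rwa [show -((n : ℝ) + 2 * s) = e by rw [he]; ring] at h1
  refine ⟨_, (hA.add hB).add hB.swap, δ / 4, by linarith,
    (cthickening_mono (by linarith) K).trans hδΩ, fun z hz p => ?_⟩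
  obtain ⟨x, y⟩ := p
  simp only [Prod.swap, Prod.mk_sub_mk]
  have e1 : ∀ x y : EuclideanSpace ℝ (Fin n), (x ∉ G₀ ∨ y ∉ G₀) →
      (G₀ ×ˢ G₀).indicator (fun p : EuclideanSpace ℝ (Fin n) × EuclideanSpace ℝ (Fin n) =>
        (u p.1 - u p.2) * (k p.1 p.2 / ‖p.1 - p.2‖ ^ (e / 2))) (x, y) = 0 := by
    intro x y h
    refine indicator_of_notMem (fun hp => ?_) _
    rcases h with h | h
    exacts [h hp.1, h hp.2]
  have e2 : ∀ x y : EuclideanSpace ℝ (Fin n), y ∈ G₀ → (K' ×ˢ G₀ᶜ).indicator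
      (fun p : EuclideanSpace ℝ (Fin n) × EuclideanSpace ℝ (Fin n) => k p.1 p.2) (x, y) = 0 :=
    fun x y h => indicator_of_notMem (fun hp => hp.2 h) _
  have e3 : ∀ x y : EuclideanSpace ℝ (Fin n), y ∉ G₀ → (K' ×ˢ G₀ᶜ).indicator
      (fun p : EuclideanSpace ℝ (Fin n) × EuclideanSpace ℝ (Fin n) => k p.1 p.2) (x, y) *
        φ (x - z) = k x y * φ (x - z) := by
    intro x y hy
    by_cases hx : x ∈ K'
    · rw [indicator_of_mem (show (x, y) ∈ K' ×ˢ G₀ᶜ from ⟨hx, hy⟩)]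
    · rw [hshift x z hz hx, mul_zero, mul_zero]
  have e4 : ∀ x, x ∉ G₀ → φ (x - z) = 0 := fun x hx => hshift x z hz fun h => hx (hK'G₀ h)
  simp only [mul_assoc (u _ - u _)]
  by_cases hx : x ∈ G₀ <;> by_cases hy : y ∈ G₀
  · rw [e2 x y hy, e2 y x hx, indicator_of_mem (show (x, y) ∈ G₀ ×ˢ G₀ from ⟨hx, hy⟩),
      indicator_of_mem (show (x - z, y - z) ∈ G ×ˢ G from
        ⟨hG₀shift x z hz hx, hG₀shift y z hz hy⟩)]
    simp only [sub_sub_sub_cancel_right]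
    rcases eq_or_ne x y with h | h
    · simp [h]
    have hq : ‖x - y‖ ^ (e / 2) ≠ 0 :=
      (Real.rpow_pos_of_pos (norm_pos_iff.2 (sub_ne_zero.2 h)) _).ne'
    field_simp
    ring
  · rw [e1 x y (Or.inr hy), e2 y x hx, e3 x y hy, e4 y hy]
    ring
  · rw [e1 x y (Or.inl hx), e2 x y hy, e3 y x hx, e4 x hx, hks y x]
    ring
  · rw [e1 x y (Or.inl hx), e3 x y hy, e3 y x hx, e4 x hx, e4 y hy]
    ring

/-! ### Functions that are not globally measurable -/

/-- The hypotheses `MemWs2Loc` and `MemTailSpace` do not force `u` to be measurable outside `Ω`.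
Measurability does follow once the inner integral of the energy form is measurable in `x`:
for `x` away from the support of `φ` that integral equals `∫ u φ k(x, ·) - u(x) ∫ φ k(x, ·)`,
and this can be solved for `u x`. -/
theorem aestronglyMeasurable_of_inner {n : ℕ} (hn : 1 ≤ n) {s Λ : ℝ} (hs0 : 0 < s) (hΛ : 1 ≤ Λ)
    {k : EuclideanSpace ℝ (Fin n) → EuclideanSpace ℝ (Fin n) → ℝ}
    (hk : IsAdmissibleKernel n s Λ k) {Ω : Set (EuclideanSpace ℝ (Fin n))} (hΩ : IsOpen Ω)
    {u φ : EuclideanSpace ℝ (Fin n) → ℝ} (hu1 : MemWs2Loc n s Ω u)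
    (hφ : MemWs2Loc n s Ω φ) (hφc : HasCompactSupport φ)
    (hφΩ : tsupport φ ⊆ Ω) (hφ0 : ∀ x, 0 ≤ φ x) (hne : ¬ ∀ᵐ x, φ x = 0)
    (hF : AEStronglyMeasurable fun x => ∫ y, (u x - u y) * (φ x - φ y) * k x y) :
    AEStronglyMeasurable u := by
  set e : ℝ := -(n : ℝ) - 2 * s with he
  have he0 : e ≤ 0 := by
    have : (0 : ℝ) ≤ n := n.cast_nonneg
    rw [he]; linarith
  set K := tsupport φ with hK
  have hKc : IsCompact K := hφc
  obtain ⟨δ, hδ, hδΩ⟩ := hKc.exists_cthickening_subset_open hΩ hφΩ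
  set G := thickening δ K with hGdef
  have hGsub : closure G ⊆ cthickening δ K := closure_thickening_subset_cthickening δ K
  have hGo : IsOpen G := isOpen_thickening
  have hGc : IsCompact (closure G) := hKc.cthickening.of_isClosed_subset isClosed_closure hGsub
  have hGΩ : closure G ⊆ Ω := hGsub.trans hδΩ
  have hKG : K ⊆ G := self_subset_thickening hδ K
  have hφz : ∀ x, x ∉ K → φ x = 0 := fun x hx => image_eq_zero_of_notMem_tsupport hx
  have hφL : MemLp φ 2 := by
    have h1 := memLp_indicator hn hφ hGo hGc hGΩ
    rwa [indicator_eq_self.2 ((subset_tsupport φ).trans hKG)] at h1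
  have hφI : Integrable φ := by
    have h1 := (hφL.locallyIntegrable (by norm_num)).integrableOn_isCompact hKc
    rwa [integrableOn_iff_integrable_of_support_subset (subset_tsupport φ)] at h1
  have huφ : Integrable fun y => u y * φ y := by
    refine ((memLp_indicator hn hu1 hGo hGc hGΩ).integrable_mul hφL).congr
      (Eventually.of_forall fun y => ?_)
    by_cases hy : y ∈ G
    · simp [indicator_of_mem hy]
    · simp [hφz y fun h => hy (hKG h)]
  have hbd : ∀ x y, x ∉ G → φ y ≠ 0 → 0 < k x y ∧ k x y ≤ Λ * δ ^ e := by
    intro x y hx hy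
    have hyK : y ∈ K := subset_tsupport φ hy
    have hd : δ ≤ ‖x - y‖ := by
      by_contra! hlt
      exact hx (mem_thickening_iff.2 ⟨y, hyK, by rwa [dist_eq_norm]⟩)
    have hxy : x ≠ y := fun h => hx (h ▸ hKG hyK)
    refine ⟨hk.pos hΛ hxy, (hk.2.2 x y hxy).2.trans ?_⟩
    exact mul_le_mul_of_nonneg_left (Real.rpow_le_rpow_of_nonpos hδ hd he0)
      (zero_le_one.trans hΛ)
  have hint : ∀ (x : EuclideanSpace ℝ (Fin n)) (f : EuclideanSpace ℝ (Fin n) → ℝ), x ∉ G →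
      (∀ y, φ y = 0 → f y = 0) → Integrable f → Integrable fun y => f y * k x y := by
    intro x f hx hf hfI
    refine (hfI.abs.mul_const (Λ * δ ^ e)).mono'
      (hfI.1.mul (hk.1.comp (measurable_const.prodMk measurable_id)).aestronglyMeasurable)
      (Eventually.of_forall fun y => ?_)
    by_cases hy : φ y = 0
    · simp [hf y hy]
    · obtain ⟨h0, h1⟩ := hbd x y hx hy
      rw [norm_mul, Real.norm_eq_abs, Real.norm_eq_abs, abs_of_pos h0]
      exact mul_le_mul_of_nonneg_left h1 (abs_nonneg _)
  have hkm : AEStronglyMeasurable (uncurry k) (volume.prod volume) := hk.1.aestronglyMeasurable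
  have hA : AEStronglyMeasurable fun x => ∫ y, φ y * k x y :=
    (hφL.1.comp_snd.mul hkm).integral_prod_right'
  have hB : AEStronglyMeasurable fun x => ∫ y, u y * φ y * k x y :=
    (huφ.1.comp_snd.mul hkm).integral_prod_right'
  -- Away from the support of `φ` the inner integral is affine in `u x` with nonzero slope.
  have hsolve : ∀ x, x ∉ G → u x = ((∫ y, u y * φ y * k x y) -
      ∫ y, (u x - u y) * (φ x - φ y) * k x y) / ∫ y, φ y * k x y := by
    intro x hx
    have i1 := hint x φ hx (fun _ h => h) hφI
    have i2 := hint x (fun y => u y * φ y) hx (fun y h => by simp [h]) huφ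
    have hpos : 0 < ∫ y, φ y * k x y := by
      have h0 : ∀ y, 0 ≤ φ y * k x y := by
        intro y
        by_cases hy : φ y = 0
        · simp [hy]
        · exact mul_nonneg (hφ0 y) (hbd x y hx hy).1.le
      rw [integral_pos_iff_support_of_nonneg h0 i1]
      refine (pos_iff_ne_zero.2 fun h => hne ?_).trans_le
        (measure_mono (s := support φ) fun y hy => mul_ne_zero hy (hbd x y hx hy).1.ne')
      exact measure_eq_zero_iff_ae_notMem.1 h |>.mono fun x hx => by simpa using hx
    have h1 : ∫ y, (u x - u y) * (φ x - φ y) * k x y =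
        (∫ y, u y * φ y * k x y) - u x * ∫ y, φ y * k x y := by
      rw [← integral_const_mul, ← integral_sub i2 (i1.const_mul _)]
      refine integral_congr_ae (Eventually.of_forall fun y => ?_)
      simp only [hφz x fun h => hx (hKG h)]
      ring
    rw [h1, sub_sub_cancel, mul_div_assoc, div_self hpos.ne', mul_one]
  have h1 : AEStronglyMeasurable u (volume.restrict G) :=
    hu1.aestronglyMeasurable hn hGo hGc hGΩ
  have h2 : AEStronglyMeasurable u (volume.restrict Gᶜ) := by
    have h3 := ((hB.aemeasurable.sub hF.aemeasurable).div hA.aemeasurable).restrict (s := Gᶜ)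
    refine (h3.congr ?_).aestronglyMeasurable
    exact (ae_restrict_iff' hGo.measurableSet.compl).2
      (Eventually.of_forall fun x hx => (hsolve x hx).symm)
  have h3 := aestronglyMeasurable_union_iff.2 ⟨h1, h2⟩
  rwa [union_compl_self, Measure.restrict_univ] at h3

/-- If `u` is not measurable, the energy form vanishes: either `φ = 0` almost everywhere, or the
outer integral takes its default value `0`. -/
theorem energyForm_eq_zero {n : ℕ} (hn : 1 ≤ n) {s Λ : ℝ} (hs0 : 0 < s) (hΛ : 1 ≤ Λ)
    {k : EuclideanSpace ℝ (Fin n) → EuclideanSpace ℝ (Fin n) → ℝ}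
    (hk : IsAdmissibleKernel n s Λ k) {Ω : Set (EuclideanSpace ℝ (Fin n))} (hΩ : IsOpen Ω)
    {u φ : EuclideanSpace ℝ (Fin n) → ℝ} (hu1 : MemWs2Loc n s Ω u)
    (hu : ¬ AEStronglyMeasurable u)
    (hφ : MemWs2Loc n s Ω φ) (hφc : HasCompactSupport φ)
    (hφΩ : tsupport φ ⊆ Ω) (hφ0 : ∀ x, 0 ≤ φ x) : energyForm n k u φ = 0 := by
  by_cases hne : ∀ᵐ x, φ x = 0
  · refine integral_eq_zero_of_ae (hne.mono fun x hx => ?_)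
    refine integral_eq_zero_of_ae (hne.mono fun y hy => ?_)
    simp [hx, hy]
  · refine integral_undef fun hI => hu ?_
    exact aestronglyMeasurable_of_inner hn hs0 hΛ hk hΩ hu1 hφ hφc hφΩ hφ0 hne hI.1

/-! ### Mollification -/

/-- Nonnegativity of the energy on smooth test functions extends to compactly supported functions
in `W^{s,2}_loc`. If `E(u, φ) < 0`, the energy against all small translates of `φ` is also
negative, hence so is its average against a mollifier `ρ`; but this average is the energy against
the smooth function `ρ ⋆ φ`. -/
theorem energyForm_nonneg {n : ℕ} (hn : 1 ≤ n) {s Λ : ℝ} (hs0 : 0 < s) (hΛ : 1 ≤ Λ)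
    {k : EuclideanSpace ℝ (Fin n) → EuclideanSpace ℝ (Fin n) → ℝ}
    (hk : IsAdmissibleKernel n s Λ k) {Ω : Set (EuclideanSpace ℝ (Fin n))} (hΩ : IsOpen Ω)
    {u : EuclideanSpace ℝ (Fin n) → ℝ} (hu1 : MemWs2Loc n s Ω u) (hu2 : MemTailSpace n s u)
    (hsm : ∀ ψ : EuclideanSpace ℝ (Fin n) → ℝ, ContDiff ℝ (⊤ : ℕ∞) ψ → HasCompactSupport ψ →
      tsupport ψ ⊆ Ω → (∀ x, 0 ≤ ψ x) → 0 ≤ energyForm n k u ψ)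
    {φ : EuclideanSpace ℝ (Fin n) → ℝ} (hφ : MemWs2Loc n s Ω φ) (hφc : HasCompactSupport φ)
    (hφΩ : tsupport φ ⊆ Ω) (hφ0 : ∀ x, 0 ≤ φ x) : 0 ≤ energyForm n k u φ := by
  by_cases hu : AEStronglyMeasurable u
  swap
  · exact (energyForm_eq_zero hn hs0 hΛ hk hΩ hu1 hu hφ hφc hφΩ hφ0).ge
  obtain ⟨hφL, T, hT, ε, hε, hεΩ, hTe⟩ :=
    exists_tameFamily hn hs0 hΛ hk hΩ hu1 hu2 hu hφ hφc hφΩ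
  have hT0 : ∫ p, T 0 p = energyForm n k u φ := by
    refine (integral_prod _ (hT.integrable 0)).trans ?_
    refine integral_congr_ae (Eventually.of_forall fun x => ?_)
    refine integral_congr_ae (Eventually.of_forall fun y => ?_)
    simp [hTe 0 (by simpa using hε)]
  by_contra! hneg
  -- Near `z = 0` the energy against the translate of `φ` stays below half its value at `0`.
  have hlt : ∀ᶠ z in 𝓝 (0 : EuclideanSpace ℝ (Fin n)), ∫ p, T z p < energyForm n k u φ / 2 :=
    (hT.cont.tendsto 0).eventually_lt_const (by rw [hT0]; linarith)
  obtain ⟨η, hη, hηT⟩ := Metric.eventually_nhds_iff.1 hlt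
  set r := min ε η with hr
  have hr0 : 0 < r := lt_min hε hη
  let f : ContDiffBump (0 : EuclideanSpace ℝ (Fin n)) := ⟨r / 2, r, by linarith, by linarith⟩
  set ρ := f.normed volume with hρ
  have hρ0 : ∀ z, 0 ≤ ρ z := fun z => f.nonneg_normed z
  have hρI : Integrable ρ := f.integrable_normed
  have hρs : ∀ z, ρ z ≠ 0 → ‖z‖ < r := by
    intro z hz
    have h1 : z ∈ support ρ := hz
    rw [hρ, f.support_normed_eq, mem_ball_zero_iff] at h1
    exact h1
  have hφloc : LocallyIntegrable φ := hφL.locallyIntegrable (by norm_num)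
  have hconv : ∀ x, Integrable fun z => ρ z * φ (x - z) := fun x =>
    (f.hasCompactSupport_normed (μ := volume)).convolutionExists_left (ContinuousLinearMap.mul ℝ ℝ)
      f.continuous_normed hφloc x
  -- The mollification of `φ`, an admissible smooth test function.
  set ψ : EuclideanSpace ℝ (Fin n) → ℝ := fun x => ∫ z, ρ z * φ (x - z) with hψ
  have hψsm : ContDiff ℝ (⊤ : ℕ∞) ψ :=
    (f.hasCompactSupport_normed (μ := volume)).contDiff_convolution_left
      (ContinuousLinearMap.mul ℝ ℝ) f.contDiff_normed hφloc
  have hψsupp : tsupport ψ ⊆ cthickening ε (tsupport φ) := by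
    refine closure_minimal (fun x hx => ?_) isClosed_cthickening
    obtain ⟨z, hz⟩ : ∃ z, ρ z * φ (x - z) ≠ 0 := by
      by_contra! h
      exact hx (by simp [hψ, h])
    refine thickening_subset_cthickening _ _ (mem_thickening_iff.2
      ⟨x - z, subset_tsupport φ (right_ne_zero_of_mul hz), ?_⟩)
    rw [dist_eq_norm, sub_sub_cancel]
    exact (hρs z (left_ne_zero_of_mul hz)).trans_le (min_le_left _ _)
  have hψc : HasCompactSupport ψ :=
    (IsCompact.cthickening hφc).of_isClosed_subset (isClosed_tsupport ψ) hψsupp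
  have hmain := hsm ψ hψsm hψc (hψsupp.trans hεΩ)
    fun x => integral_nonneg fun z => mul_nonneg (hρ0 z) (hφ0 _)
  have hTI := hT.integrable_mul hρI
  have hE : energyForm n k u ψ = ∫ z, ρ z * ∫ p, T z p := by
    have h1 : ∀ p : EuclideanSpace ℝ (Fin n) × EuclideanSpace ℝ (Fin n),
        (u p.1 - u p.2) * (ψ p.1 - ψ p.2) * k p.1 p.2 = ∫ z, ρ z * T z p := by
      intro p
      rw [hψ]
      simp only
      rw [← integral_sub (hconv p.1) (hconv p.2), ← integral_const_mul, ← integral_mul_const]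
      refine integral_congr_ae (Eventually.of_forall fun z => ?_)
      by_cases hz : ρ z = 0
      · simp [hz]
      · simp only [hTe z ((hρs z hz).trans_le (min_le_left _ _)) p]
        ring
    have h2 := integral_integral_swap (f := fun z p => ρ z * T z p) hTI
    simp only [integral_const_mul] at h2
    rw [h2]
    refine Eq.trans ?_ (integral_prod _ hTI.integral_prod_right).symm
    refine integral_congr_ae (Eventually.of_forall fun x => ?_)
    exact integral_congr_ae (Eventually.of_forall fun y => h1 (x, y))
  have hle : ∫ z, ρ z * ∫ p, T z p ≤ ∫ z, ρ z * (energyForm n k u φ / 2) := by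
    refine integral_mono ?_ (hρI.mul_const _) fun z => ?_
    · have := hTI.integral_prod_left
      simpa only [integral_const_mul] using this
    · by_cases hz : ρ z = 0
      · simp [hz]
      · refine mul_le_mul_of_nonneg_left (le_of_lt (hηT ?_)) (hρ0 z)
        rw [dist_zero_right]
        exact (hρs z hz).trans_le (min_le_right _ _)
  rw [integral_mul_const, hρ, f.integral_normed, one_mul] at hle
  linarith

theorem energyForm_neg {n : ℕ} (k : EuclideanSpace ℝ (Fin n) → EuclideanSpace ℝ (Fin n) → ℝ)
    (u φ : EuclideanSpace ℝ (Fin n) → ℝ) :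
    energyForm n k (fun x => -u x) φ = -energyForm n k u φ := by
  simp only [energyForm, ← integral_neg]
  congr! 4
  ring

theorem MemWs2Loc.neg {n : ℕ} {s : ℝ} {Ω : Set (EuclideanSpace ℝ (Fin n))}
    {u : EuclideanSpace ℝ (Fin n) → ℝ} (hu : MemWs2Loc n s Ω u) :
    MemWs2Loc n s Ω fun x => -u x := by
  intro G h1 h2 h3
  have h4 : ∀ x y, |-u x - -u y| = |u x - u y| := fun x y => by
    rw [← abs_neg]; congr 1; ring
  simpa only [abs_neg, h4] using hu G h1 h2 h3

end

/-- **Enlarged class of test functions** (Proposition 2.2). -/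
theorem enlarged_test_function_class
    (n : ℕ) (hn : 1 ≤ n) (s Λ : ℝ) (hs0 : 0 < s) (hs1 : s < 1) (hΛ : 1 ≤ Λ)
    (k : EuclideanSpace ℝ (Fin n) → EuclideanSpace ℝ (Fin n) → ℝ)
    (hk : IsAdmissibleKernel n s Λ k)
    (Ω : Set (EuclideanSpace ℝ (Fin n))) (hΩ : IsOpen Ω)
    (u : EuclideanSpace ℝ (Fin n) → ℝ)
    (hu1 : MemWs2Loc n s Ω u) (hu2 : MemTailSpace n s u) :
    (IsWeakSupersolution n s k Ω (fun _ => 0) u ↔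
      ∀ φ : EuclideanSpace ℝ (Fin n) → ℝ,
        MemWs2Loc n s Ω φ → HasCompactSupport φ → tsupport φ ⊆ Ω → (∀ x, 0 ≤ φ x) →
        0 ≤ energyForm n k u φ) ∧
    (IsWeakSubsolution n s k Ω (fun _ => 0) u ↔
      ∀ φ : EuclideanSpace ℝ (Fin n) → ℝ,
        MemWs2Loc n s Ω φ → HasCompactSupport φ → tsupport φ ⊆ Ω → (∀ x, 0 ≤ φ x) →
        energyForm n k u φ ≤ 0) := by
  refine ⟨⟨fun h φ hφ hc hΩφ h0 => ?_, fun h => ⟨hu1, hu2, fun φ hφ hc hΩφ h0 => ?_⟩⟩,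
    ⟨fun h φ hφ hc hΩφ h0 => ?_, fun h => ⟨hu1, hu2, fun φ hφ hc hΩφ h0 => ?_⟩⟩⟩
  · refine energyForm_nonneg hn hs0 hΛ hk hΩ hu1 hu2 (fun ψ h1 h2 h3 h4 => ?_) hφ hc hΩφ h0
    simpa using h.2.2 ψ h1 h2 h3 h4
  · simpa using h φ (memWs2Loc_of_contDiff hn hs1 hφ hc) hc hΩφ h0
  · have hu2' : MemTailSpace n s fun x => -u x := by simpa only [MemTailSpace, abs_neg] using hu2
    have h5 := energyForm_nonneg hn hs0 hΛ hk hΩ hu1.neg hu2' (fun ψ h1 h2 h3 h4 => by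
      simpa [energyForm_neg] using h.2.2 ψ h1 h2 h3 h4) hφ hc hΩφ h0
    simpa [energyForm_neg] using h5
  · simpa using h φ (memWs2Loc_of_contDiff hn hs1 hφ hc) hc hΩφ h0
end
end

section
/- Interior upper bound for the Poisson kernel (upper half of Theorem 4.4): Let n ≥ 1, s ∈ (0,1) with 2s < n, Λ ≥ 1, C1 ≥ 1, and let k be an (s,Λ)-admissible kernel. Let G : B_r(x1) × B_r(x1) → [0,∞] be measurable with G(x,y) ≤ C1 |x−y|^{2s−n} for all x, y ∈ B_r(x1), and define P(x,z) = ∫_{B_r(x1)} G(x,y) k(z,y) dy for x ∈ B_r(x1) and z ∈ ℝ^n∖B_r(x1). Then there exists a constant C = C(n,s,Λ,C1) > 0, independent of r and x1, such that P(x,z) ≤ C r^{2s} |x−z|^{−n−2s} for all x ∈ B_{r/2}(x1) and z ∈ ℝ^n∖B_{2r}(x1). -/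
/-!
For `y ∈ B_r(x₁)` and `z ∉ B_{2r}(x₁)` the point `z` is far from the whole ball, so that
`|z - y|` and `|x - z|` are comparable and `k(z, y) ≤ C |x - z|^{-n-2s}` can be pulled out of the
integral defining `P(x, z)` (`kernel_le_of_far`). What remains is `∫_{B_r(x₁)} G(x, y) dy`, which
the Green function bound dominates by the Riesz potential `∫_{B_{2r}(0)} |w|^{2s-n} dw`. This is
finite since `s > 0`, and by scaling it equals a constant times `r^{2s}` (`lintegral_riesz_le`).
-/

open MeasureTheory Metric
open scoped ENNReal

noncomputable section

/-- Homogeneity of the Riesz potential of a ball: substituting `y = r w` in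
`∫_{B_{2r}} |y|^{2s-n} dy` produces the factor `r^{n + (2s-n)} = r^{2s}`. -/
lemma integral_riesz_ball (n : ℕ) (s r : ℝ) (hr : 0 < r) :
    ∫ y in ball (0 : EuclideanSpace ℝ (Fin n)) (2 * r), ‖y‖ ^ (2 * s - (n : ℝ)) =
      r ^ (2 * s) *
        ∫ y in ball (0 : EuclideanSpace ℝ (Fin n)) 2, ‖y‖ ^ (2 * s - (n : ℝ)) := by
  have h := Measure.setIntegral_comp_smul_of_pos (volume : Measure (EuclideanSpace ℝ (Fin n)))
    (fun y => ‖y‖ ^ (2 * s - (n : ℝ))) (ball 0 2) hr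
  rw [_root_.smul_ball hr.ne', smul_zero, Real.norm_of_nonneg hr.le, finrank_euclideanSpace_fin,
    mul_comm r 2] at h
  have h2 : ∀ y : EuclideanSpace ℝ (Fin n), ‖r • y‖ ^ (2 * s - (n : ℝ)) =
      r ^ (2 * s - (n : ℝ)) * ‖y‖ ^ (2 * s - (n : ℝ)) := fun y => by
    rw [norm_smul, Real.norm_of_nonneg hr.le, Real.mul_rpow hr.le (norm_nonneg _)]
  simp only [h2, integral_const_mul, smul_eq_mul] at h
  rw [Real.rpow_sub hr, Real.rpow_natCast] at h
  have : r ^ n ≠ 0 := by positivity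
  field_simp at h
  exact h.symm

/-- The singularity `|y|^{2s-n}` is integrable on bounded balls because `s > 0`. -/
lemma integrableOn_riesz_ball (n : ℕ) (hn : 1 ≤ n) (s : ℝ) (hs : 0 < s) (R : ℝ) :
    IntegrableOn (fun y : EuclideanSpace ℝ (Fin n) => ‖y‖ ^ (2 * s - (n : ℝ))) (ball 0 R) := by
  refine integrableOn_ball_of_norm_le_rpow (C := 1) (α := n - 2 * s) ?_ ?_ ?_ ?_
  · simpa using hn
  · rw [finrank_euclideanSpace_fin]; linarith
  · refine Filter.Eventually.of_forall fun y => ?_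
    rw [Real.norm_of_nonneg (by positivity), one_mul, neg_sub]
  · exact (measurable_norm.pow_const _).aestronglyMeasurable

/-- The Riesz potential of `B_r(x₁)` at a point `x` of that ball is at most a multiple of
`r^{2s}`, since `B_r(x₁) ⊆ B_{2r}(x)`. -/
lemma lintegral_riesz_le (n : ℕ) (hn : 1 ≤ n) (s : ℝ) (hs : 0 < s) (r : ℝ) (hr : 0 < r)
    (x1 x : EuclideanSpace ℝ (Fin n)) (hx : x ∈ ball x1 r) :
    ∫⁻ y in ball x1 r, ENNReal.ofReal (‖x - y‖ ^ (2 * s - (n : ℝ))) ≤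
      ENNReal.ofReal (r ^ (2 * s) *
        ∫ y in ball (0 : EuclideanSpace ℝ (Fin n)) 2, ‖y‖ ^ (2 * s - (n : ℝ))) := by
  rw [← integral_riesz_ball n s r hr, ofReal_integral_eq_lintegral_ofReal
    (integrableOn_riesz_ball n hn s hs _)
    (Filter.Eventually.of_forall fun y => by simp only [Pi.zero_apply]; positivity),
    ← lintegral_indicator measurableSet_ball, ← lintegral_indicator measurableSet_ball,
    ← lintegral_sub_left_eq_self ((ball 0 (2 * r)).indicator _) x]
  refine lintegral_mono fun y => ?_
  by_cases hy : y ∈ ball x1 r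
  · have : x - y ∈ ball (0 : EuclideanSpace ℝ (Fin n)) (2 * r) := by
      rw [mem_ball_zero_iff, ← dist_eq_norm]
      have := dist_triangle_right x y x1
      rw [mem_ball] at hx hy
      linarith
    rw [Set.indicator_of_mem hy, Set.indicator_of_mem this]
  · rw [Set.indicator_of_notMem hy]
    exact zero_le

/-- Off the ball `B_{2r}(x₁)` the kernel `k(z, ·)` is comparable on `B_r(x₁)` to its decay at
any `x ∈ B_{r/2}(x₁)`, because `|x - z| ≤ 3 |z - y|`. -/
lemma kernel_le_of_far (n : ℕ) (s Λ : ℝ) (hs : 0 < s) (hΛ : 1 ≤ Λ)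
    (k : EuclideanSpace ℝ (Fin n) → EuclideanSpace ℝ (Fin n) → ℝ)
    (hk : IsAdmissibleKernel n s Λ k) (x1 : EuclideanSpace ℝ (Fin n)) (r : ℝ) (hr : 0 < r)
    (x : EuclideanSpace ℝ (Fin n)) (hx : x ∈ ball x1 (r / 2))
    (z : EuclideanSpace ℝ (Fin n)) (hz : z ∉ ball x1 (2 * r))
    (y : EuclideanSpace ℝ (Fin n)) (hy : y ∈ ball x1 r) :
    k z y ≤ Λ * (3 ^ ((n : ℝ) + 2 * s) * ‖x - z‖ ^ (-(n : ℝ) - 2 * s)) := by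
  rw [mem_ball] at hx hy hz
  have h1 := dist_triangle z y x1
  have h2 := dist_triangle_right x z x1
  have h3 := dist_triangle x1 x z
  rw [dist_comm x1 x, dist_comm x1 z] at h3
  have hxz : 0 < dist x z := by linarith
  have hzy : dist x z / 3 ≤ dist z y := by linarith
  have hne : z ≠ y := dist_pos.1 (by linarith)
  refine (hk.2.2 z y hne).2.trans (mul_le_mul_of_nonneg_left ?_ (by linarith))
  rw [← dist_eq_norm, ← dist_eq_norm]
  calc dist z y ^ (-(n : ℝ) - 2 * s)
      ≤ (dist x z / 3) ^ (-(n : ℝ) - 2 * s) :=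
        Real.rpow_le_rpow_of_nonpos (by positivity) hzy
          (by linarith [(n.cast_nonneg : (0 : ℝ) ≤ n)])
    _ = 3 ^ ((n : ℝ) + 2 * s) * dist x z ^ (-(n : ℝ) - 2 * s) := by
        rw [Real.div_rpow hxz.le (by norm_num), div_eq_mul_inv, ← Real.rpow_neg (by norm_num),
          mul_comm]
        congr 2
        ring

/-- **Interior upper bound for the Poisson kernel** (upper half of Theorem 4.4), with the
upper Green function bound taken as a hypothesis. Here
`P(x,z) = ∫_{B_r(x₁)} G(x,y) k(z,y) dy`. -/
theorem poisson_kernel_interior_upper_bound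
    (n : ℕ) (hn : 1 ≤ n) (s Λ C1 : ℝ) (hs0 : 0 < s) (hs1 : s < 1) (hsn : 2 * s < (n : ℝ))
    (hΛ : 1 ≤ Λ) (hC1 : 1 ≤ C1) :
    ∃ C : ℝ, 0 < C ∧
      ∀ (k : EuclideanSpace ℝ (Fin n) → EuclideanSpace ℝ (Fin n) → ℝ)
        (G : EuclideanSpace ℝ (Fin n) → EuclideanSpace ℝ (Fin n) → ℝ≥0∞)
        (x1 : EuclideanSpace ℝ (Fin n)) (r : ℝ),
        IsAdmissibleKernel n s Λ k →
        0 < r →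
        Measurable (Function.uncurry G) →
        (∀ x ∈ ball x1 r, ∀ y ∈ ball x1 r,
          G x y ≤ ENNReal.ofReal (C1 * ‖x - y‖ ^ (2 * s - (n : ℝ)))) →
        ∀ x ∈ ball x1 (r / 2), ∀ z ∉ ball x1 (2 * r),
          (∫⁻ y in ball x1 r, G x y * ENNReal.ofReal (k z y)) ≤
            ENNReal.ofReal (C * r ^ (2 * s) * ‖x - z‖ ^ (-(n : ℝ) - 2 * s)) := by
  set M : ℝ := ∫ y in ball (0 : EuclideanSpace ℝ (Fin n)) 2, ‖y‖ ^ (2 * s - (n : ℝ)) with hM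
  have hM0 : 0 ≤ M := integral_nonneg fun y => by simp only [Pi.zero_apply]; positivity
  -- `M + 1` rather than `M` makes positivity of the constant immediate.
  refine ⟨C1 * Λ * 3 ^ ((n : ℝ) + 2 * s) * (M + 1), by positivity, ?_⟩
  intro k G x1 r hk hr _ hG x hx z hz
  have hxr : x ∈ ball x1 r := ball_subset_ball (by linarith) hx
  set D : ℝ := ‖x - z‖ ^ (-(n : ℝ) - 2 * s) with hD
  have hD0 : 0 ≤ D := by positivity
  set A : ℝ := C1 * (Λ * (3 ^ ((n : ℝ) + 2 * s) * D)) with hA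
  have hA0 : 0 ≤ A := by positivity
  calc (∫⁻ y in ball x1 r, G x y * ENNReal.ofReal (k z y))
      ≤ ∫⁻ y in ball x1 r,
          ENNReal.ofReal A * ENNReal.ofReal (‖x - y‖ ^ (2 * s - (n : ℝ))) := by
        refine setLIntegral_mono' measurableSet_ball fun y hy => ?_
        refine (mul_le_mul' (hG x hxr y hy) (ENNReal.ofReal_le_ofReal
          (kernel_le_of_far n s Λ hs0 hΛ k hk x1 r hr x hx z hz y hy))).trans_eq ?_
        rw [← ENNReal.ofReal_mul (by positivity), ← ENNReal.ofReal_mul hA0]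
        congr 1
        ring
    _ = ENNReal.ofReal A *
          ∫⁻ y in ball x1 r, ENNReal.ofReal (‖x - y‖ ^ (2 * s - (n : ℝ))) :=
        lintegral_const_mul' _ _ ENNReal.ofReal_ne_top
    _ ≤ ENNReal.ofReal A * ENNReal.ofReal (r ^ (2 * s) * M) := by
        gcongr
        exact lintegral_riesz_le n hn s hs0 r hr x1 x hxr
    _ ≤ _ := by
        rw [← ENNReal.ofReal_mul hA0]
        refine ENNReal.ofReal_le_ofReal ?_
        have h : 0 ≤ A * r ^ (2 * s) := by positivity
        have : C1 * Λ * 3 ^ ((n : ℝ) + 2 * s) * (M + 1) * r ^ (2 * s) * D =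
            A * (r ^ (2 * s) * M) + A * r ^ (2 * s) := by rw [hA]; ring
        linarith
end
end

section
/- Interior lower bound for the Poisson kernel (lower half of Theorem 4.4): Let n ≥ 1, s ∈ (0,1) with 2s < n, Λ ≥ 1, C1 ≥ 1, and let k be an (s,Λ)-admissible kernel. Let G : B_r(x1) × B_r(x1) → [0,∞] be measurable with G(x,y) ≥ C1^{−1} |x−y|^{2s−n} whenever x, y ∈ B_r(x1) and |x−y| ≤ min(dist(x, ∂B_r(x1)), dist(y, ∂B_r(x1))), and define P(x,z) = ∫_{B_r(x1)} G(x,y) k(z,y) dy for x ∈ B_r(x1) and z ∈ ℝ^n∖B_r(x1). Then there exists a constant C = C(n,s,Λ,C1) > 0, independent of r and x1, such that P(x,z) ≥ C^{−1} r^{2s} |x−z|^{−n−2s} for all x ∈ B_{r/2}(x1) and z ∈ ℝ^n∖B_{2r}(x1). -/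
/-!
The bound already comes from the part of the integral over the ball `B_{r/4}(x)`. That ball keeps
distance at least `r/4` from the sphere `∂B_r(x₁)`, so the Green function hypothesis applies on it
and gives `G x y ≥ C1⁻¹ (r/4)^{2s-n}` (the exponent is negative, and `|x-y| < r/4`). Since
`|x-z| ≥ 3r/2`, also `|z-y| ≤ 2|x-z|` there, whence
`k(z,y) ≥ Λ⁻¹ 2^{-n-2s} |x-z|^{-n-2s}`. Multiplying by the volume `(r/4)^n |B_1|` turns
`(r/4)^{2s-n}` into `(r/4)^{2s}`, so the constant is
`C⁻¹ = C1⁻¹ Λ⁻¹ 2^{-n-2s} 4^{-2s} |B_1|`.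
-/

open MeasureTheory Metric
open scoped ENNReal

noncomputable section

/-- The reverse triangle inequality for the distance to a sphere. Nontriviality of the space
makes the sphere nonempty; `infDist` to the empty set would be `0`. -/
lemma le_infDist_sphere {E : Type*} [NormedAddCommGroup E] [NormedSpace ℝ E] [Nontrivial E]
    {w c : E} {r d : ℝ} (hr : 0 < r) (h : dist w c + d ≤ r) : d ≤ infDist w (sphere c r) := by
  refine (le_infDist (NormedSpace.sphere_nonempty.2 hr.le)).2 fun p hp => ?_
  have h1 : dist p c = r := hp
  have h2 := dist_triangle p w c
  rw [dist_comm p w] at h2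
  linarith

/-- **Interior lower bound for the Poisson kernel** (lower half of Theorem 4.4), with the
interior lower Green function bound taken as a hypothesis. Here
`P(x,z) = ∫_{B_r(x₁)} G(x,y) k(z,y) dy`. -/
theorem poisson_kernel_interior_lower_bound
    (n : ℕ) (hn : 1 ≤ n) (s Λ C1 : ℝ) (hs0 : 0 < s) (hs1 : s < 1) (hsn : 2 * s < (n : ℝ))
    (hΛ : 1 ≤ Λ) (hC1 : 1 ≤ C1) :
    ∃ C : ℝ, 0 < C ∧
      ∀ (k : EuclideanSpace ℝ (Fin n) → EuclideanSpace ℝ (Fin n) → ℝ)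
        (G : EuclideanSpace ℝ (Fin n) → EuclideanSpace ℝ (Fin n) → ℝ≥0∞)
        (x1 : EuclideanSpace ℝ (Fin n)) (r : ℝ),
        IsAdmissibleKernel n s Λ k →
        0 < r →
        Measurable (Function.uncurry G) →
        (∀ x ∈ ball x1 r, ∀ y ∈ ball x1 r,
          ‖x - y‖ ≤ min (infDist x (sphere x1 r)) (infDist y (sphere x1 r)) →
          ENNReal.ofReal (C1⁻¹ * ‖x - y‖ ^ (2 * s - (n : ℝ))) ≤ G x y) →
        ∀ x ∈ ball x1 (r / 2), ∀ z ∉ ball x1 (2 * r),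
          ENNReal.ofReal (C⁻¹ * r ^ (2 * s) * ‖x - z‖ ^ (-(n : ℝ) - 2 * s)) ≤
            ∫⁻ y in ball x1 r, G x y * ENNReal.ofReal (k z y) := by
  have : NeZero n := ⟨by omega⟩
  set ω : ℝ := (volume (ball (0 : EuclideanSpace ℝ (Fin n)) 1)).toReal with hω
  have hωtop : volume (ball (0 : EuclideanSpace ℝ (Fin n)) 1) ≠ ⊤ := measure_ball_lt_top.ne
  have hωpos : 0 < ω :=
    ENNReal.toReal_pos (measure_ball_pos volume _ one_pos).ne' hωtop
  have hC1' : 0 < C1 := by linarith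
  have hΛ' : 0 < Λ := by linarith
  refine ⟨(C1⁻¹ * Λ⁻¹ * 2 ^ (-(n : ℝ) - 2 * s) * 4 ^ (-(2 * s)) * ω)⁻¹, by positivity, ?_⟩
  intro k G x1 r hk hr _ hG x hx z hz
  rw [inv_inv]
  have hx' : dist x x1 < r / 2 := hx
  have hz' : 2 * r ≤ dist z x1 := by simpa using hz
  have hxz : 3 / 2 * r ≤ ‖x - z‖ := by
    rw [← dist_eq_norm]
    have := dist_triangle z x x1
    rw [dist_comm z x] at this
    linarith
  -- The centre is removed because in Lean `0 ^ (2s-n) = 0`: the hypothesis on `G` is void at `y = x`.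
  have hsub : ball x (r / 4) \ {x} ⊆ ball x1 r := by
    rintro y ⟨hy, -⟩
    have hy' : dist y x < r / 4 := hy
    have := dist_triangle y x x1
    exact mem_ball.2 (by linarith)
  set g : ℝ := C1⁻¹ * (r / 4) ^ (2 * s - (n : ℝ)) with hg
  set κ : ℝ := Λ⁻¹ * (2 * ‖x - z‖) ^ (-(n : ℝ) - 2 * s) with hκ
  have hg0 : 0 ≤ g := by positivity
  have hκ0 : 0 ≤ κ := by positivity
  have hpt : ∀ y ∈ ball x (r / 4) \ {x},
      ENNReal.ofReal (g * κ) ≤ G x y * ENNReal.ofReal (k z y) := by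
    rintro y ⟨hy, hyx⟩
    have hy' : dist y x < r / 4 := hy
    have hyx' : y ≠ x := hyx
    have hxy : ‖x - y‖ < r / 4 := by rwa [← dist_eq_norm, dist_comm]
    have hxy0 : 0 < ‖x - y‖ := norm_pos_iff.2 (sub_ne_zero.2 hyx'.symm)
    have hyx1 := dist_triangle y x x1
    have hzy : 0 < ‖z - y‖ := by
      rw [← dist_eq_norm]
      have := dist_triangle z y x1
      linarith
    have hzy2 : ‖z - y‖ ≤ 2 * ‖x - z‖ := by
      have := norm_add_le (z - x) (x - y)
      rw [sub_add_sub_cancel, norm_sub_rev z x] at this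
      linarith
    rw [ENNReal.ofReal_mul hg0]
    refine mul_le_mul' (le_trans (ENNReal.ofReal_le_ofReal ?_)
      (hG x (ball_subset_ball (by linarith) hx) y (hsub ⟨hy, hyx⟩) ?_))
      (ENNReal.ofReal_le_ofReal (le_trans ?_ (hk.2.2 z y ?_).1))
    · exact mul_le_mul_of_nonneg_left
        (Real.rpow_le_rpow_of_nonpos hxy0 hxy.le (by linarith)) (by positivity)
    · refine le_min (le_infDist_sphere hr ?_) (le_infDist_sphere hr ?_) <;> linarith
    · exact mul_le_mul_of_nonneg_left
        (Real.rpow_le_rpow_of_nonpos hzy hzy2 (by linarith)) (by positivity)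
    · exact sub_ne_zero.1 (norm_pos_iff.1 hzy)
  have hvol : volume (ball x (r / 4) \ {x}) = ENNReal.ofReal ((r / 4) ^ n * ω) := by
    rw [measure_sdiff_null (measure_singleton x), Measure.addHaar_ball volume x (by positivity),
      finrank_euclideanSpace_fin, ENNReal.ofReal_mul (by positivity), hω,
      ENNReal.ofReal_toReal hωtop]
  calc ENNReal.ofReal (C1⁻¹ * Λ⁻¹ * 2 ^ (-(n : ℝ) - 2 * s) * 4 ^ (-(2 * s)) * ω * r ^ (2 * s) *
        ‖x - z‖ ^ (-(n : ℝ) - 2 * s))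
      = ENNReal.ofReal (g * κ) * volume (ball x (r / 4) \ {x}) := by
        rw [hvol, ← ENNReal.ofReal_mul (by positivity)]
        congr 1
        have e1 : (r / 4) ^ (2 * s - (n : ℝ)) * (r / 4) ^ n = r ^ (2 * s) * 4 ^ (-(2 * s)) := by
          rw [← Real.rpow_natCast, ← Real.rpow_add (by positivity), sub_add_cancel,
            Real.div_rpow hr.le (by norm_num), Real.rpow_neg (by norm_num), div_eq_mul_inv]
        rw [hg, hκ, Real.mul_rpow (by norm_num) (norm_nonneg _)]
        linear_combination (-(C1⁻¹ * Λ⁻¹ * 2 ^ (-(n : ℝ) - 2 * s) * ω *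
          ‖x - z‖ ^ (-(n : ℝ) - 2 * s))) * e1
    _ = ∫⁻ _ in ball x (r / 4) \ {x}, ENNReal.ofReal (g * κ) := by
        rw [setLIntegral_const]
    _ ≤ ∫⁻ y in ball x (r / 4) \ {x}, G x y * ENNReal.ofReal (k z y) :=
        setLIntegral_mono' (measurableSet_ball.diff (measurableSet_singleton x)) hpt
    _ ≤ ∫⁻ y in ball x1 r, G x y * ENNReal.ofReal (k z y) := lintegral_mono_set hsub
end
end
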